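/- Edge trace identity for the linearized Cotton–York operator: for every C^∞ matrix field τ : ℝ³ → ℝ^{3×3} with symmetric values and every choice of pairwise orthogonal unit vectors t, m, n ∈ ℝ³ with t' := n × m, the identity tᵀ (tr3cott(τ)) t = n · tre2(τ) − (1/2) div_f(div_f(tr1cott(τ))) holds at every point of ℝ³. -/

import Mathlib

noncomputable section

open Matrix

/-- Vectors in ℝ³. -/
abbrev V3 := Fin 3 → ℝ
/-- 3×3 real matrices. -/
abbrev M3 := Matrix (Fin 3) (Fin 3) ℝ

/-- Partial derivative ∂ᵢ of a scalar field. -/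
def pd (i : Fin 3) (f : V3 → ℝ) : V3 → ℝ :=
  fun x => fderiv ℝ f x (Pi.single i 1)

/-- Gradient matrix of a vector field: (grad v)_{ij} = ∂ⱼ vᵢ. -/
def vgrad (v : V3 → V3) : V3 → M3 :=
  fun x => Matrix.of fun i j => pd j (fun y => v y i) x

/-- Divergence of a vector field. -/
def vdiv (v : V3 → V3) : V3 → ℝ :=
  fun x => ∑ i, pd i (fun y => v y i) x

/-- Cross product on ℝ³. -/
def cross (a b : V3) : V3 :=
  fun i => a (i + 1) * b (i + 2) - a (i + 2) * b (i + 1)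

/-- Curl of a vector field. -/
def vcurl (v : V3 → V3) : V3 → V3 :=
  fun x i => pd (i + 1) (fun y => v y (i + 2)) x - pd (i + 2) (fun y => v y (i + 1)) x

/-- Row-wise curl of a matrix field. -/
def mcurl (τ : V3 → M3) : V3 → M3 :=
  fun x => Matrix.of fun i j =>
    pd (j + 1) (fun y => τ y i (j + 2)) x - pd (j + 2) (fun y => τ y i (j + 1)) x

/-- Row-wise divergence of a matrix field. -/
def mdiv (τ : V3 → M3) : V3 → V3 :=
  fun x i => ∑ j, pd j (fun y => τ y i j) x

/-- Symmetric part of a matrix. -/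
def msym (A : M3) : M3 := (1 / 2 : ℝ) • (A + Aᵀ)

/-- Deviatoric (trace-free) part of a matrix. -/
def devm (A : M3) : M3 := A - ((1 / 3 : ℝ) * A.trace) • (1 : M3)

/-- The skew-symmetric matrix associated to a vector: mskw(ω) y = ω × y. -/
def mskw (w : V3) : M3 := !![0, -w 2, w 1; w 2, 0, -w 0; -w 1, w 0, 0]

/-- vskw(A) := mskw⁻¹(skw A). -/
def vskw (A : M3) : V3 :=
  (1 / 2 : ℝ) • ![A 2 1 - A 1 2, A 0 2 - A 2 0, A 1 0 - A 0 1]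

/-- S⁻¹(A) := Aᵀ − (1/2)(tr A)I. -/
def Sinv (A : M3) : M3 := Aᵀ - ((1 / 2 : ℝ) * A.trace) • (1 : M3)

/-- S(A) := Aᵀ − (tr A)I. -/
def Sop (A : M3) : M3 := Aᵀ - A.trace • (1 : M3)

/-- Incompatibility operator inc τ := curl (S⁻¹ (curl τ)). -/
def inc (τ : V3 → M3) : V3 → M3 := mcurl fun x => Sinv (mcurl τ x)

/-- Linearized Cotton–York operator cott τ := curl (S⁻¹ (inc τ)). -/
def cott (τ : V3 → M3) : V3 → M3 := mcurl fun x => Sinv (inc τ x)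

/-- Hessian matrix of a scalar field. -/
def hess (u : V3 → ℝ) : V3 → M3 :=
  fun x => Matrix.of fun i j => pd i (pd j u) x

/-- Euclidean dot product on ℝ³. -/
def dotp (a b : V3) : ℝ := ∑ i, a i * b i

/-- Smoothness of a vector field (componentwise C^∞). -/
def SmoothV (v : V3 → V3) : Prop := ∀ i, ContDiff ℝ (⊤ : ℕ∞) fun x => v x i

/-- Smoothness of a matrix field (entrywise C^∞). -/
def SmoothM (τ : V3 → M3) : Prop := ∀ i j, ContDiff ℝ (⊤ : ℕ∞) fun x => τ x i j

/-- Conformal Killing fields. -/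
def CK (v : V3 → V3) : Prop :=
  ∃ (a c d : V3) (b : ℝ), ∀ x,
    v x = dotp x x • a - (2 * dotp a x) • x + b • x + cross c x + d

/-- Rigid motions. -/
def RM (v : V3 → V3) : Prop := ∃ a b : V3, ∀ x, v x = cross a x + b

/-- Lowest-order Raviart–Thomas fields. -/
def RT (v : V3 → V3) : Prop := ∃ (a : V3) (b : ℝ), ∀ x, v x = a + b • x

/-- Polynomial scalar functions of total degree at most k. -/
def PolyLe (k : ℕ) (f : V3 → ℝ) : Prop :=
  ∃ p : MvPolynomial (Fin 3) ℝ, p.totalDegree ≤ k ∧ ∀ x, f x = MvPolynomial.eval x p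

/-- Matrix fields with entries in P_k and values symmetric traceless. -/
def PolyLeST (k : ℕ) (τ : V3 → M3) : Prop :=
  (∀ i j, PolyLe k fun x => τ x i j) ∧ (∀ x, (τ x)ᵀ = τ x) ∧ ∀ x, (τ x).trace = 0


/-- Directional derivative of a scalar field along a fixed vector w. -/
def pdir (w : V3) (f : V3 → ℝ) : V3 → ℝ := fun x => fderiv ℝ f x w

/-- Entrywise directional derivative of a vector field. -/
def pdirV (w : V3) (v : V3 → V3) : V3 → V3 := fun x i => pdir w (fun y => v y i) x

/-- Entrywise directional derivative of a matrix field. -/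
def pdirM (w : V3) (A : V3 → M3) : V3 → M3 :=
  fun x => Matrix.of fun i j => pdir w (fun y => A y i j) x

/-- Column-wise curl ∇ × A: the j-th column is the curl of the j-th column of A. -/
def colcurl (A : V3 → M3) : V3 → M3 :=
  fun x => Matrix.of fun i j =>
    pd (i + 1) (fun y => A y (i + 2) j) x - pd (i + 2) (fun y => A y (i + 1) j) x

/-- Gradient of a scalar field as a vector field. -/
def gradS (f : V3 → ℝ) : V3 → V3 := fun x i => pd i f x

/-- Projection matrix Π := I − n nᵀ. -/
def Pm (n : V3) : M3 := 1 - Matrix.vecMulVec n n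

/-- Row-wise cross product of a matrix with a vector. -/
def mcrossv (A : M3) (w : V3) : M3 := Matrix.of fun i => cross (A i) w

/-- Surface gradient grad_f w := (grad w) Π. -/
def gradf (n : V3) (w : V3 → V3) : V3 → M3 := fun x => vgrad w x * Pm n

/-- Surface deformation def_f w := sym (grad_f w). -/
def deff (n : V3) (w : V3 → V3) : V3 → M3 := fun x => msym (gradf n w x)

/-- Surface divergence of a matrix field: div_f A := (∂_t A) t + (∂_m A) m. -/
def divfM (t m : V3) (A : V3 → M3) : V3 → V3 :=
  fun x => (pdirM t A x).mulVec t + (pdirM m A x).mulVec m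

/-- Surface divergence of a vector field: div_f w := t·∂_t w + m·∂_m w. -/
def divfV (t m : V3) (w : V3 → V3) : V3 → ℝ :=
  fun x => dotp t (pdirV t w x) + dotp m (pdirV m w x)

/-- Surface deviatoric part dev_f A := ΠAΠ − (1/2) tr(ΠAΠ) Π. -/
def devf (n : V3) (A : M3) : M3 :=
  Pm n * A * Pm n - ((1 / 2 : ℝ) * (Pm n * A * Pm n).trace) • Pm n

/-- tr2inc(τ) := 2 def_f(Πτn) − Π(∂_n τ)Π. -/
def tr2inc (n : V3) (τ : V3 → M3) : V3 → M3 :=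
  fun x => (2 : ℝ) • deff n (fun y => (Pm n * τ y).mulVec n) x - Pm n * pdirM n τ x * Pm n

/-- tr1cott(τ) := sym((Πτ) × n). -/
def tr1cott (n : V3) (τ : V3 → M3) : V3 → M3 :=
  fun x => msym (mcrossv (Pm n * τ x) n)

/-- tr2cott(τ) := sym(tr2inc(τ) × n). -/
def tr2cott (n : V3) (τ : V3 → M3) : V3 → M3 :=
  fun x => msym (mcrossv (tr2inc n τ x) n)

/-- tr3cott(τ) := dev_f(tr2inc(sym curl τ)). -/
def tr3cott (n : V3) (τ : V3 → M3) : V3 → M3 :=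
  fun x => devf n (tr2inc n (fun y => msym (mcurl τ y)) x)

/-- tre2(τ) := 2(∂_t(sym curl τ))t − ∇(tᵀ(curl τ)t). -/
def tre2 (t : V3) (τ : V3 → M3) : V3 → V3 :=
  fun x => (2 : ℝ) • (pdirM t (fun y => msym (mcurl τ y)) x).mulVec t
    - gradS (fun y => dotp t ((mcurl τ y).mulVec t)) x

/-- tre3(τ) := −tᵀ(∇ × (sym curl τ))t − (1/2)∂_t(t·div τ). -/
def tre3 (t : V3) (τ : V3 → M3) : V3 → ℝ :=
  fun x => -dotp t ((colcurl (fun y => msym (mcurl τ y)) x).mulVec t)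
    - (1 / 2 : ℝ) * pdir t (fun y => dotp t (mdiv τ y)) x

/-- Entrywise partial derivative of a matrix field. -/
def pdM (k : Fin 3) (A : V3 → M3) : V3 → M3 :=
  fun x => Matrix.of fun i j => pd k (fun y => A y i j) x

/-- Curl, algebraically, from the three partial derivatives. -/
def curlC (E : Fin 3 → M3) : M3 :=
  Matrix.of fun i j => E (j + 1) i (j + 2) - E (j + 2) i (j + 1)

theorem pdir_eq (w : V3) (f : V3 → ℝ) (x : V3) : pdir w f x = ∑ k, w k * pd k f x := by
  unfold pdir pd
  conv_lhs => rw [← Finset.univ_sum_single w]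
  rw [map_sum]
  refine Finset.sum_congr rfl fun k _ => ?_
  have : (Pi.single k (w k) : V3) = w k • Pi.single k 1 := by
    rw [← Pi.single_smul]; simp
  rw [this, map_smul, smul_eq_mul]

theorem pd_sum (c : Fin 3 → Fin 3 → ℝ) (a : Fin 3 → Fin 3 → V3 → ℝ)
    (ha : ∀ i j, ContDiff ℝ (⊤ : ℕ∞) (a i j)) (k : Fin 3) (x : V3) :
    pd k (fun y => ∑ i, ∑ j, c i j * a i j y) x = ∑ i, ∑ j, c i j * pd k (a i j) x := by
  have hd : ∀ i j, DifferentiableAt ℝ (a i j) x := fun i j =>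
    ((ha i j).differentiable (by simp)).differentiableAt
  unfold pd
  rw [fderiv_fun_sum (fun i _ => DifferentiableAt.fun_sum fun j _ => (hd i j).const_mul _)]
  rw [ContinuousLinearMap.sum_apply]
  refine Finset.sum_congr rfl fun i _ => ?_
  rw [fderiv_fun_sum (fun j _ => (hd i j).const_mul _), ContinuousLinearMap.sum_apply]
  refine Finset.sum_congr rfl fun j _ => ?_
  rw [fderiv_const_mul (hd i j)]
  simp

theorem pd_lin (c : M3) (A : V3 → M3) (hA : SmoothM A) (k : Fin 3) (x : V3) :
    pd k (fun y => ∑ i, ∑ j, c i j * A y i j) x = ∑ i, ∑ j, c i j * pdM k A x i j :=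
  pd_sum (fun i j => c i j) (fun i j y => A y i j) hA k x

theorem pd_linear (L : M3 → ℝ) (hL : IsLinearMap ℝ L) (A : V3 → M3) (hA : SmoothM A)
    (k : Fin 3) (x : V3) : pd k (fun y => L (A y)) x = L (pdM k A x) := by
  have key : ∀ M : M3, L M = ∑ i, ∑ j, L (Matrix.single i j 1) * M i j := by
    intro M
    conv_lhs => rw [Matrix.matrix_eq_sum_single M]
    change (hL.mk' L) _ = _
    rw [map_sum]
    refine Finset.sum_congr rfl fun i _ => ?_
    rw [map_sum]
    refine Finset.sum_congr rfl fun j _ => ?_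
    have : Matrix.single i j (M i j) = M i j • Matrix.single i j (1 : ℝ) := by
      rw [Matrix.smul_single]; simp
    rw [this, map_smul, smul_eq_mul, mul_comm]
    rfl
  have h2 : (fun y => L (A y)) = fun y => ∑ i, ∑ j, L (Matrix.single i j 1) * A y i j := by
    funext y; exact key _
  rw [h2, key (pdM k A x)]
  exact pd_lin (Matrix.of fun i j => L (Matrix.single i j 1)) A hA k x

theorem pd_smooth (k : Fin 3) (f : V3 → ℝ) (hf : ContDiff ℝ (⊤ : ℕ∞) f) :
    ContDiff ℝ (⊤ : ℕ∞) (pd k f) := by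
  unfold pd
  exact (hf.fderiv_right (m := ((⊤ : ℕ∞) : WithTop ℕ∞)) (by simp)).clm_apply contDiff_const

theorem pdM_smooth (k : Fin 3) (A : V3 → M3) (hA : SmoothM A) : SmoothM (pdM k A) :=
  fun i j => pd_smooth k _ (hA i j)

theorem pd_comm (k l : Fin 3) (f : V3 → ℝ) (hf : ContDiff ℝ (⊤ : ℕ∞) f) (x : V3) :
    pd k (pd l f) x = pd l (pd k f) x := by
  have hs : IsSymmSndFDerivAt ℝ f x :=
    (hf.contDiffAt).isSymmSndFDerivAt (by
      rw [minSmoothness_of_isRCLikeNormedField]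
      exact WithTop.coe_le_coe.mpr (le_top : (2 : ℕ∞) ≤ ⊤))
  have hd : DifferentiableAt ℝ (fderiv ℝ f) x :=
    ((hf.fderiv_right (m := ((⊤ : ℕ∞) : WithTop ℕ∞)) (by simp)).differentiable (by simp)).differentiableAt
  have h : ∀ a b : Fin 3, pd a (pd b f) x
      = fderiv ℝ (fderiv ℝ f) x (Pi.single a 1) (Pi.single b 1) := by
    intro a b
    unfold pd
    rw [fderiv_clm_apply hd (differentiableAt_const _)]
    simp
  rw [h, h]
  exact hs _ _

theorem pdM_comm (k l : Fin 3) (A : V3 → M3) (hA : SmoothM A) (x : V3) :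
    pdM k (pdM l A) x = pdM l (pdM k A) x := by
  ext i j
  exact pd_comm k l _ (hA i j) x

theorem pdM_symm (k : Fin 3) (A : V3 → M3) (hA : ∀ x, (A x)ᵀ = A x) (x : V3) :
    (pdM k A x)ᵀ = pdM k A x := by
  ext i j
  have : (fun y => A y j i) = fun y => A y i j := by
    funext y; conv_lhs => rw [← hA y]
    rfl
  simp only [Matrix.transpose_apply, pdM, Matrix.of_apply, this]

theorem pd_add' (k : Fin 3) (f g : V3 → ℝ) (hf : ContDiff ℝ (⊤ : ℕ∞) f)
    (hg : ContDiff ℝ (⊤ : ℕ∞) g) (x : V3) :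
    pd k (fun y => f y - g y) x = pd k f x - pd k g x := by
  unfold pd
  rw [fderiv_fun_sub (hf.differentiable (by simp)).differentiableAt
    (hg.differentiable (by simp)).differentiableAt]
  simp

theorem mcurl_smooth (A : V3 → M3) (hA : SmoothM A) : SmoothM (mcurl A) := by
  intro i j
  exact (pd_smooth _ _ (hA _ _)).sub (pd_smooth _ _ (hA _ _))

theorem pdM_mcurl (A : V3 → M3) (hA : SmoothM A) (k : Fin 3) (x : V3) :
    pdM k (mcurl A) x = curlC fun l => pdM k (pdM l A) x := by
  ext i j
  exact pd_add' k _ _ (pd_smooth _ _ (hA _ _)) (pd_smooth _ _ (hA _ _)) x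

theorem msym_smooth (A : V3 → M3) (hA : SmoothM A) : SmoothM (fun y => msym (A y)) := by
  intro i j
  have : (fun y => msym (A y) i j) = fun y => (1 / 2 : ℝ) * (A y i j + A y j i) := by
    funext y; simp [msym]
  rw [this]
  exact contDiff_const.mul ((hA i j).add (hA j i))

theorem pdM_msym (A : V3 → M3) (hA : SmoothM A) (k : Fin 3) (x : V3) :
    pdM k (fun y => msym (A y)) x = msym (pdM k A x) := by
  ext i j
  refine pd_linear (fun M => msym M i j) ⟨fun M N => ?_, fun c M => ?_⟩ A hA k x
  · simp [msym]; ring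
  · simp [msym]; ring

theorem pdM_tr1cott (n : V3) (A : V3 → M3) (hA : SmoothM A) (k : Fin 3) :
    pdM k (tr1cott n A) = tr1cott n (pdM k A) := by
  funext x
  ext i j
  refine pd_linear (fun M => msym (mcrossv (Pm n * M) n) i j)
    ⟨fun M N => ?_, fun c M => ?_⟩ A hA k x
  · simp [msym, mcrossv, cross, Matrix.mul_add]; ring
  · simp [msym, mcrossv, cross]; ring

theorem tr1cott_smooth (n : V3) (A : V3 → M3) (hA : SmoothM A) : SmoothM (tr1cott n A) := by
  intro i j
  simp only [tr1cott, msym, mcrossv, cross, Matrix.smul_apply, Matrix.add_apply,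
    Matrix.transpose_apply, Matrix.of_apply, Matrix.mul_apply, Fin.sum_univ_three, smul_eq_mul]
  have := hA
  unfold SmoothM at this
  fun_prop

theorem pdirM_eq (w : V3) (A : V3 → M3) (x : V3) :
    pdirM w A x = ∑ k, w k • pdM k A x := by
  ext i j
  simp only [pdirM, Matrix.of_apply, pdir_eq, Matrix.sum_apply, Matrix.smul_apply, smul_eq_mul]
  rfl

theorem vgrad_eq (n : V3) (P : M3) (A : V3 → M3) (hA : SmoothM A) (x : V3) :
    vgrad (fun y => (P * A y).mulVec n) x =
      Matrix.of fun i k => ((P * pdM k A x).mulVec n) i := by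
  ext i k
  refine pd_linear (fun M => ((P * M).mulVec n) i) ⟨fun M N => ?_, fun c M => ?_⟩ A hA k x
  · simp [Matrix.mul_add, Matrix.add_mulVec]
  · simp [Matrix.smul_mulVec]

theorem gradS_eq (t : V3) (A : V3 → M3) (hA : SmoothM A) (x : V3) :
    gradS (fun y => dotp t ((A y).mulVec t)) x = fun k => dotp t ((pdM k A x).mulVec t) := by
  ext k
  refine pd_linear (fun M => dotp t (M.mulVec t)) ⟨fun M N => ?_, fun c M => ?_⟩ A hA k x
  · simp [dotp, Matrix.add_mulVec, Fin.sum_univ_three]; ring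
  · simp [dotp, Matrix.smul_mulVec, Fin.sum_univ_three]; ring

theorem Pm_eq (t m n : V3)
    (ht : dotp t t = 1) (hm : dotp m m = 1) (hn : dotp n n = 1)
    (htm : dotp t m = 0) (htn : dotp t n = 0) (hmn : dotp m n = 0) (i j : Fin 3) :
    t i * t j + m i * m j = Pm n i j := by
  have h1 : (Matrix.of ![t, m, n] : M3) * (Matrix.of ![t, m, n] : M3)ᵀ = 1 := by
    simp only [dotp, Fin.sum_univ_three] at *
    ext a b
    fin_cases a <;> fin_cases b <;>
      simp [Matrix.mul_apply, Fin.sum_univ_three] <;> linarith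
  have h2 := congrArg (fun M : M3 => M i j) (mul_eq_one_comm.mp h1)
  simp only [Matrix.mul_apply, Fin.sum_univ_three] at h2
  simp [Pm, Matrix.vecMulVec_apply] at h2 ⊢
  linarith

theorem divfV_eq (t m n : V3) (hP : ∀ i j, t i * t j + m i * m j = Pm n i j)
    (w : V3 → V3) (x : V3) :
    divfV t m w x = ∑ l, ∑ i, Pm n l i * pd l (fun y => w y i) x := by
  simp only [divfV, dotp, pdirV, pdir_eq, ← hP, Fin.sum_univ_three]
  ring

theorem divfM_eq (t m n : V3) (hP : ∀ i j, t i * t j + m i * m j = Pm n i j)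
    (A : V3 → M3) (x : V3) (i : Fin 3) :
    divfM t m A x i = ∑ k, ∑ j, Pm n k j * pdM k A x i j := by
  simp only [divfM, Pi.add_apply, Matrix.mulVec, dotProduct, pdirM, Matrix.of_apply, pdM,
    pdir_eq, ← hP, Fin.sum_univ_three]
  ring

theorem pd_divfM (n : V3) (A : V3 → M3) (hA : SmoothM A) (l i : Fin 3) (x : V3) :
    pd l (fun y => ∑ k, ∑ j, Pm n k j * pdM k A y i j) x =
      ∑ k, ∑ j, Pm n k j * pdM l (pdM k A) x i j := by
  exact pd_lin (Pm n) (fun y => Matrix.of fun k j => pdM k A y i j)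
    (fun k j => pdM_smooth k A hA i j) l x

theorem Pm_sq (n : V3) (hn : dotp n n = 1) : Pm n * Pm n = Pm n := by
  have : Matrix.vecMulVec n n * Matrix.vecMulVec n n = Matrix.vecMulVec n n := by
    simp only [dotp, Fin.sum_univ_three] at hn
    ext i j
    simp only [Matrix.mul_apply, Matrix.vecMulVec_apply, Fin.sum_univ_three]
    linear_combination n i * n j * hn
  simp [Pm, Matrix.mul_sub, Matrix.sub_mul, this]

theorem Pm_symm (n : V3) : (Pm n)ᵀ = Pm n := by
  ext i j
  simp [Pm, Matrix.vecMulVec_apply, Matrix.one_apply, mul_comm, eq_comm]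

theorem Pm_mulVec (t n : V3) (htn : dotp t n = 0) : (Pm n).mulVec t = t := by
  simp only [dotp, Fin.sum_univ_three] at htn
  have h : (Matrix.vecMulVec n n).mulVec t = 0 := by
    ext i
    simp only [Matrix.mulVec, dotProduct, Matrix.vecMulVec_apply, Fin.sum_univ_three,
      Pi.zero_apply]
    linear_combination n i * htn
  rw [Pm, Matrix.sub_mulVec, h, Matrix.one_mulVec, sub_zero]

theorem mcrossv_mul (P M : M3) (n : V3) : mcrossv (P * M) n = P * mcrossv M n := by
  ext i j
  simp [mcrossv, cross, Matrix.mul_apply, Fin.sum_univ_three]; ring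

theorem mcrossv_Pm (M : M3) (n : V3) : mcrossv M n * Pm n = mcrossv M n := by
  ext i j
  fin_cases j <;>
  simp [Pm, Matrix.mul_sub, mcrossv, cross, Matrix.mul_apply, Fin.sum_univ_three,
    Matrix.vecMulVec_apply] <;> ring

theorem sum_rhs (n : V3) (hn : dotp n n = 1) (D : Fin 3 → Fin 3 → M3)
    (hD : ∀ k l, D k l = D l k) :
    ∑ l, ∑ i, Pm n l i * ∑ k, ∑ j, Pm n k j * msym (mcrossv (Pm n * D l k) n) i j
      = ∑ l, ∑ k, (Pm n * mcrossv (D l k) n) l k := by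
  have hPs : ∀ i j, Pm n i j = Pm n j i := fun i j => by
    conv_lhs => rw [← Pm_symm n]
    rfl
  have e : ∀ l k, Pm n * mcrossv (D l k) n
      = Pm n * mcrossv (Pm n * D l k) n * Pm n := by
    intro l k
    rw [mcrossv_mul, ← Matrix.mul_assoc, Pm_sq n hn, Matrix.mul_assoc, mcrossv_Pm]
  simp only [e]
  generalize hM : (fun l k => mcrossv (Pm n * D l k) n) = M
  have hM' : ∀ l k, mcrossv (Pm n * D l k) n = M l k := fun l k => by rw [← hM]
  have hMs : ∀ l k, M l k = M k l := fun l k => by rw [← hM', ← hM', hD]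
  simp only [hM']
  have hsplit : ∀ l, ∑ i, Pm n l i * ∑ k, ∑ j, Pm n k j * msym (M l k) i j
      = ∑ k, (Pm n * msym (M l k) * Pm n) l k := by
    intro l
    have : ∀ k, (Pm n * msym (M l k) * Pm n) l k
        = ∑ i, Pm n l i * ∑ j, Pm n k j * msym (M l k) i j := by
      intro k
      simp only [Matrix.mul_apply, Fin.sum_univ_three, hPs k]
      ring
    simp only [this, Finset.mul_sum]
    rw [Finset.sum_comm]
  simp only [hsplit]
  have hms : ∀ l k, (Pm n * msym (M l k) * Pm n) l k
      = (1 / 2 : ℝ) * ((Pm n * M l k * Pm n) l k + (Pm n * M k l * Pm n) k l) := by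
    intro l k
    have h1 : (Pm n * (M k l) * Pm n) k l = (Pm n * (M l k)ᵀ * Pm n) l k := by
      have : Pm n * (M l k)ᵀ * Pm n = (Pm n * M l k * Pm n)ᵀ := by
        simp only [Matrix.transpose_mul, Pm_symm, Matrix.mul_assoc]
      rw [this, hMs k l]; rfl
    rw [h1]
    simp only [msym, Matrix.mul_smul, Matrix.smul_mul, Matrix.mul_add, Matrix.add_mul,
      Matrix.smul_apply, Matrix.add_apply, smul_eq_mul]
  simp only [hms, Fin.sum_univ_three]
  ring

theorem trace_lhs (n : V3) (hn : dotp n n = 1) (S : Fin 3 → M3)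
    (htr : ∀ k, (S k).trace = 0) :
    (Pm n * ((2 : ℝ) • msym ((Matrix.of fun i k => ((Pm n * S k).mulVec n) i) * Pm n)
      - Pm n * (∑ k, n k • S k) * Pm n) * Pm n).trace
    = 2 * ∑ k, ((S k).mulVec n) k - dotp n ((∑ k, n k • S k).mulVec n) := by
  set G : M3 := Matrix.of fun i k => ((S k).mulVec n) i with hG
  have hGe : (Matrix.of fun i k => ((Pm n * S k).mulVec n) i) = Pm n * G := by
    ext i k
    simp only [Matrix.of_apply, hG, ← Matrix.mulVec_mulVec, Matrix.mul_apply]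
    rfl
  have hsq := Pm_sq n hn
  have t1 : (Pm n * (Pm n * G * Pm n) * Pm n).trace = (Pm n * G).trace := by
    rw [Matrix.trace_mul_comm]
    simp only [← Matrix.mul_assoc, hsq]
    rw [Matrix.trace_mul_comm]
    simp only [← Matrix.mul_assoc, hsq]
  have t2 : (Pm n * (Pm n * G * Pm n)ᵀ * Pm n).trace = (Pm n * G).trace := by
    rw [← t1, ← Matrix.trace_transpose]
    congr 1
    simp only [Matrix.transpose_mul, Matrix.transpose_transpose, Pm_symm, Matrix.mul_assoc]
  have t3 : ∀ N : M3, (Pm n * (Pm n * N * Pm n) * Pm n).trace = (Pm n * N).trace := by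
    intro N
    rw [Matrix.trace_mul_comm]
    simp only [← Matrix.mul_assoc, hsq]
    rw [Matrix.trace_mul_comm]
    simp only [← Matrix.mul_assoc, hsq]
  have t4 : ∀ N : M3, (Pm n * N).trace = N.trace - dotp n (N.mulVec n) := by
    intro N
    simp [Pm, Matrix.sub_mul, Matrix.trace, Matrix.diag, Matrix.mul_apply, dotp, Matrix.mulVec,
      dotProduct, Fin.sum_univ_three, Matrix.vecMulVec_apply]
    ring
  rw [hGe, Matrix.mul_sub, Matrix.sub_mul, Matrix.trace_sub, t3]
  simp only [msym, Matrix.mul_smul, Matrix.smul_mul, Matrix.mul_add, Matrix.add_mul,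
    Matrix.trace_smul, Matrix.trace_add, t1, t2, t4, smul_eq_mul]
  have hz : (∑ k, n k • S k).trace = 0 := by
    simp [Matrix.trace_sum, htr]
  have hGG : dotp n (G.mulVec n) = dotp n ((∑ k, n k • S k).mulVec n) := by
    simp [hG, dotp, Matrix.mulVec, dotProduct, Fin.sum_univ_three]
    ring
  have hGt : G.trace = ∑ k, ((S k).mulVec n) k := by
    simp [hG, Matrix.trace]
  rw [hz, hGG, hGt]
  ring

theorem alg_final (n : V3) (D : Fin 3 → Fin 3 → M3)
    (hD : ∀ k l, D k l = D l k) (hs : ∀ k l, (D k l)ᵀ = D k l) :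
    2 * ∑ k, ((msym (curlC (D k))).mulVec n) k
      - dotp n ((∑ k, n k • msym (curlC (D k))).mulVec n)
    = ∑ l, ∑ k, (Pm n * mcrossv (D l k) n) l k := by
  have s' : ∀ k l i j, D k l i j = D k l j i := fun k l i j => by
    conv_lhs => rw [← hs k l]
    rfl
  have s1 : ∀ k l, D k l 1 0 = D k l 0 1 := fun k l => s' k l _ _
  have s2 : ∀ k l, D k l 2 0 = D k l 0 2 := fun k l => s' k l _ _
  have s3 : ∀ k l, D k l 2 1 = D k l 1 2 := fun k l => s' k l _ _
  simp [Pm, Matrix.sub_mul, mcrossv, cross, msym, curlC, Matrix.mulVec, dotProduct, dotp,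
    Fin.sum_univ_three, Matrix.mul_apply, Matrix.vecMulVec_apply, hD 1 0, hD 2 0, hD 2 1,
    s1, s2, s3]
  ring

theorem tt_devf (t n : V3) (ht : dotp t t = 1) (htn : dotp t n = 0) (A : M3) :
    dotp t ((devf n A).mulVec t)
      = dotp t (A.mulVec t) - (1 / 2 : ℝ) * (Pm n * A * Pm n).trace := by
  have hP := Pm_mulVec t n htn
  have hP2 : t ᵥ* Pm n = t := by
    rw [← Pm_symm n, Matrix.vecMul_transpose, hP]
  have hd : ∀ a b : V3, dotp a b = a ⬝ᵥ b := fun a b => rfl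
  rw [hd] at ht
  simp only [hd, devf, Matrix.sub_mulVec, Matrix.smul_mulVec, ← Matrix.mulVec_mulVec, hP,
    dotProduct_sub, dotProduct_smul, ht, Matrix.dotProduct_mulVec t (Pm n), hP2, smul_eq_mul,
    mul_one]

theorem tt_tr2inc (t n : V3) (htn : dotp t n = 0) (S C : Fin 3 → M3)
    (hS : ∀ k, S k = msym (C k)) :
    dotp t (((2 : ℝ) • msym ((Matrix.of fun i k => ((Pm n * S k).mulVec n) i) * Pm n)
      - Pm n * (∑ k, n k • S k) * Pm n).mulVec t)
    = dotp n ((2 : ℝ) • (∑ k, t k • S k).mulVec t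
      - fun k => dotp t ((C k).mulVec t)) := by
  have hP := Pm_mulVec t n htn
  have hP2 : t ᵥ* Pm n = t := by
    rw [← Pm_symm n, Matrix.vecMul_transpose, hP]
  have hd : ∀ a b : V3, dotp a b = a ⬝ᵥ b := fun a b => rfl
  have hms : ∀ M : M3, t ⬝ᵥ (msym M *ᵥ t) = t ⬝ᵥ (M *ᵥ t) := by
    intro M
    simp [msym, Matrix.mulVec, dotProduct, Fin.sum_univ_three]
    ring
  have hGe : (Matrix.of fun i k => ((Pm n * S k).mulVec n) i)
      = Pm n * (Matrix.of fun i k => ((S k).mulVec n) i) := by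
    ext i k
    simp only [Matrix.of_apply, ← Matrix.mulVec_mulVec, Matrix.mul_apply]
    rfl
  have hC : ∀ k, t ⬝ᵥ (C k *ᵥ t) = t ⬝ᵥ (S k *ᵥ t) := fun k => by rw [hS, hms]
  have hSs : ∀ k i j, S k i j = S k j i := fun k i j => by
    rw [hS]; simp [msym, add_comm]
  simp only [hd, Matrix.sub_mulVec, Matrix.smul_mulVec, hGe, hC,
    dotProduct_sub, dotProduct_smul, hms]
  simp only [← Matrix.mulVec_mulVec, hP, Matrix.dotProduct_mulVec t (Pm n), hP2]
  simp [Matrix.mulVec, dotProduct, Fin.sum_univ_three, hSs _ 1 0, hSs _ 2 0, hSs _ 2 1]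
  ring

theorem trace_curl (D : Fin 3 → M3) (hs : ∀ l, (D l)ᵀ = D l) :
    (msym (curlC D)).trace = 0 := by
  have s' : ∀ l i j, D l i j = D l j i := fun l i j => by
    conv_lhs => rw [← hs l]
    rfl
  simp [msym, curlC, Matrix.trace, Fin.sum_univ_three, s' _ 1 0, s' _ 2 0, s' _ 2 1]
  ring

/-- edge trace identity
tᵀ(tr3cott τ)t = n·tre2(τ) − (1/2) div_f div_f (tr1cott τ). -/
theorem edge_trace_tr3cott_tt (τ : V3 → M3) (hτ : SmoothM τ) (hsym : ∀ x, (τ x)ᵀ = τ x)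
    (t m n : V3)
    (ht : dotp t t = 1) (hm : dotp m m = 1) (hn : dotp n n = 1)
    (htm : dotp t m = 0) (htn : dotp t n = 0) (hmn : dotp m n = 0) :
    ∀ x, dotp t ((tr3cott n τ x).mulVec t) =
      dotp n (tre2 t τ x)
        - (1 / 2 : ℝ) * divfV t m (divfM t m (tr1cott n τ)) x := by
  intro x
  have hP := Pm_eq t m n ht hm hn htm htn hmn
  have hc := mcurl_smooth τ hτ
  have hσ := msym_smooth _ hc
  set D : Fin 3 → Fin 3 → M3 := fun k l => pdM k (pdM l τ) x with hDdef
  have hD : ∀ k l, D k l = D l k := fun k l => pdM_comm k l τ hτ x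
  have hs : ∀ k l, (D k l)ᵀ = D k l := fun k l =>
    pdM_symm k _ (pdM_symm l τ hsym) x
  have hC : ∀ k, pdM k (mcurl τ) x = curlC (D k) := fun k => pdM_mcurl τ hτ k x
  have hS : ∀ k, pdM k (fun y => msym (mcurl τ y)) x = msym (curlC (D k)) := fun k => by
    rw [pdM_msym _ hc, hC]
  have hR : divfV t m (divfM t m (tr1cott n τ)) x
      = ∑ l, ∑ k, (Pm n * mcrossv (D l k) n) l k := by
    rw [divfV_eq t m n hP, ← sum_rhs n hn D hD]
    refine Finset.sum_congr rfl fun l _ => Finset.sum_congr rfl fun i _ => ?_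
    congr 1
    simp only [divfM_eq t m n hP]
    rw [pd_divfM n _ (tr1cott_smooth n τ hτ)]
    refine Finset.sum_congr rfl fun k _ => Finset.sum_congr rfl fun j _ => ?_
    rw [pdM_tr1cott n τ hτ, pdM_tr1cott n _ (pdM_smooth k τ hτ)]
    rfl
  rw [hR, tr3cott, tt_devf t n ht htn]
  simp only [tr2inc, deff, gradf, tre2]
  rw [vgrad_eq n (Pm n) _ hσ, pdirM_eq, pdirM_eq, gradS_eq t _ hc]
  simp only [hS, hC]
  rw [trace_lhs n hn (fun k => msym (curlC (D k))) (fun k => trace_curl _ (hs k)),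
    alg_final n D hD hs,
    tt_tr2inc t n htn (fun k => msym (curlC (D k))) (fun k => curlC (D k)) (fun _ => rfl)]


end
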